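/- For every integer k ≥ 3, the images of z, a, c in the quotient ring ℂ[x_0,…,x_k,a,b,c,z]/I(k) form a regular sequence on that ring. -/

import Mathlib

/-!
The variable `z` is treated by a deformation argument, `a` and `c` by an explicit description of
the special fibre `z = 0`.

Modulo `z` the Cramer relations become the `2 × 2` minors cutting out the cone over the rational
normal curve, and the recurrences become multiples of `q = a s² + b s t + c t²` under the
substitution `psi : x_i ↦ s^(k-i) t^i`, `z ↦ 0`. Modulo the minors a monomial in the `x_i` depends
only on its degree and index sum (`mul_stdMon`). This yields a linear map `rho` from `ℂ[s,t,a,b,c]`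
back to `R/(I(k) + (z))` which is linear over `R` (`rho_psi_mul`), inverts `psi` (`rho_psi`) and
kills the multiples of `q` (`rho_quad_mul`). Hence `g ∈ I(k) + (z)` if and only if `q ∣ psi g`, and
membership in `I(k) + (z, a)` is likewise detected by `psi g ∈ (q, a)`. Regularity of `a` and `c`
then follows from the primality of variables in `ℂ[s,t,a,b,c]`, since `a ∤ q` and
`c ∤ q mod a` (`mem_Jk_of_av_mul`, `mem_of_cv_mul`).

For `z`, let `[s : t]` and `[σ : τ]` be the two roots of a generic quadratic form. The family
`x_i = s^(k-i) t^i + ε σ^(k-i) τ^i`, `z = ε (s τ - t σ)²` satisfies all the relations of `I(k)`;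
the Cramer relations hold because the minors of the band matrix `N` have a closed form in terms of
the roots (`band_det`). At `ε = 0` it specialises to the generic point of the special fibre. So the
kernel `P` of the corresponding homomorphism `phi` into a domain satisfies
`I(k) ⊆ P ⊆ I(k) + (z)`, while `z ∉ P`. Everything is homogeneous for `deg x_i = k`,
`deg a = deg b = deg c = 2`, `deg z = 4`, and induction on the degree shows that the homogeneous
elements of `P` lie in `I(k)` (`mem_Ik_of_phi_eq_zero`). As `P` is prime and does not contain `z`,
the variable `z` is regular modulo `I(k)` (`mem_Ik_of_zv_mul`).
-/

/-!
The polar variety `V(k) ⊆ 𝔸^{k+5}`: for `k ≥ 3` the quotient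
`ℂ[x_0,…,x_k,a,b,c,z]/I(k)` is an integral domain of Krull dimension 5,
and likewise for the `k = 2` complete intersection.
-/

open MvPolynomial

noncomputable section

/-- The ambient polynomial ring `ℂ[x_0,…,x_k,a,b,c,z]`:
variables are `Sum.inl i` for `x_i` (`0 ≤ i ≤ k`) and `Sum.inr 0,1,2,3`
for `a, b, c, z`. -/
abbrev Vk.R (k : ℕ) : Type := MvPolynomial (Fin (k + 1) ⊕ Fin 4) ℂ

namespace Vk

variable (k : ℕ)

/-- The variable `x_i` (for `i ≤ k`; junk value `0` out of range). -/
def xv (i : ℕ) : R k := if h : i ≤ k then X (Sum.inl ⟨i, by omega⟩) else 0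

/-- The variable `a`. -/
def av : R k := X (Sum.inr 0)

/-- The variable `b`. -/
def bv : R k := X (Sum.inr 1)

/-- The variable `c`. -/
def cv : R k := X (Sum.inr 2)

/-- The variable `z`. -/
def zv : R k := X (Sum.inr 3)

/-- Entry of the `k × (k-2)` matrix `N`: `a` on the diagonal `r = s`,
`b` for `r = s+1`, `c` for `r = s+2`, `0` otherwise. -/
def Nent (r s : ℕ) : R k :=
  if r = s then av k else if r = s + 1 then bv k else if r = s + 2 then cv k else 0

/-- The index (among `0,…,k-1`) of the `t`-th remaining row after deleting
rows `p` and `q` (where `p < q`). -/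
def skip (p q t : ℕ) : ℕ := if t < p then t else if t < q - 1 then t + 1 else t + 2

/-- The `(k-2) × (k-2)` submatrix `N(p,q)` of `N` obtained by deleting rows
`p` and `q`. -/
def Nsub (p q : ℕ) : Matrix (Fin (k - 2)) (Fin (k - 2)) (R k) :=
  fun t s => Nent k (skip p q (t : ℕ)) (s : ℕ)

/-- The generators of the ideal `I(k)`: the recurrence relations
`a x_{i-1} + b x_i + c x_{i+1}` for `1 ≤ i ≤ k-1` together with the Cramer
relations `x_p x_{q+1} - x_{p+1} x_q - (-1)^{q-p-1} z det N(p,q)` for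
`0 ≤ p < q ≤ k-1`. -/
def Igen : Set (R k) :=
  { P | ∃ i : ℕ, 1 ≤ i ∧ i ≤ k - 1 ∧
      P = av k * xv k (i - 1) + bv k * xv k i + cv k * xv k (i + 1) } ∪
  { P | ∃ p q : ℕ, p < q ∧ q ≤ k - 1 ∧
      P = xv k p * xv k (q + 1) - xv k (p + 1) * xv k q
          - (-1) ^ (q - p - 1) * zv k * (Nsub k p q).det }

/-- The ideal `I(k)` defining the polar variety `V(k)`. -/
def Ik : Ideal (R k) := Ideal.span (Igen k)

end Vk

namespace Vk

/-! ### The minors of the band matrix -/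

section Band

variable {A : Type*} [CommRing A]

/-- The matrix `N(p,q)` with `m = k - 2` columns, with the three band entries `a, b, c`
taken in an arbitrary commutative ring. -/
def band (a b c : A) (m p q : ℕ) : Matrix (Fin m) (Fin m) A :=
  fun t s => if skip p q t = s then a else if skip p q t = s + 1 then b
    else if skip p q t = s + 2 then c else 0

variable (a b c : A)

theorem band_succ_succ (m p q : ℕ) (hpq : p < q) :
    (band a b c (m + 1) (p + 1) (q + 1)).det = a * (band a b c m p q).det := by
  rw [Matrix.det_succ_row_zero, Finset.sum_eq_single 0]
  · have h : (band a b c (m + 1) (p + 1) (q + 1)).submatrix Fin.succ (Fin.succAbove 0)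
        = band a b c m p q := by
      ext t s
      have : skip (p + 1) (q + 1) ((t : ℕ) + 1) = skip p q t + 1 := by
        unfold skip; split_ifs <;> omega
      simp [band, this, add_right_comm _ 1]
    rw [h]
    simp [band, skip]
  · intro j _ hj
    have : (0 : ℕ) ≠ (j : ℕ) := fun h => hj (Fin.ext h.symm)
    simp [band, skip, this]
  · simp

theorem band_zero_one (m : ℕ) : (band a b c m 0 1).det = c ^ m := by
  rw [Matrix.det_of_isUpperTriangular]
  · simp [band, skip]
  · intro i j hij
    have : (j : ℕ) < i := hij
    simp only [band, skip]
    split_ifs <;> first | rfl | omega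

theorem band_minor_zero (m n : ℕ) :
    (band a b c (m + 1) 0 (n + 2)).submatrix (Fin.succAbove 0) Fin.succ
      = band a b c m 0 (n + 1) := by
  ext t s
  have : skip 0 (n + 2) ((t : ℕ) + 1) = skip 0 (n + 1) t + 1 := by
    unfold skip; split_ifs <;> omega
  simp [band, this, add_right_comm _ 1]

theorem band_zero_two (m : ℕ) :
    (band a b c (m + 1) 0 2).det = b * (band a b c m 0 1).det := by
  rw [Matrix.det_succ_column_zero, Finset.sum_eq_single 0]
  · rw [band_minor_zero a b c m 0]
    simp [band, skip]
  · intro j _ hj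
    have : (j : ℕ) ≠ 0 := fun h => hj (Fin.ext h)
    have : skip 0 2 (j : ℕ) = j + 2 := by unfold skip; split_ifs <;> omega
    have h1 : band a b c (m + 1) 0 2 j 0 = 0 := by simp [band, this]; omega
    simp [h1]
  · simp

theorem band_zero_add_three (m n : ℕ) :
    (band a b c (m + 2) 0 (n + 3)).det
      = b * (band a b c (m + 1) 0 (n + 2)).det - c * (a * (band a b c m 0 (n + 1)).det) := by
  have hminor : (band a b c (m + 2) 0 (n + 3)).submatrix (Fin.succAbove 1) Fin.succ
      = band a b c (m + 1) 1 (n + 2) := by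
    ext t s
    have : skip 0 (n + 3) ((Fin.succAbove (1 : Fin (m + 2)) t : Fin (m + 2)) : ℕ)
        = skip 1 (n + 2) t + 1 := by
      rcases Fin.eq_zero_or_eq_succ t with rfl | ⟨u, rfl⟩
      · simp [skip]
      · have h : Fin.succAbove (1 : Fin (m + 2)) u.succ = u.succ.succ :=
          Fin.succAbove_of_le_castSucc _ _ (by simp [Fin.le_def])
        rw [h]
        simp only [Fin.val_succ]
        unfold skip; split_ifs <;> omega
    simp [band, this, add_right_comm _ 1]
  rw [Matrix.det_succ_column_zero, Fin.sum_univ_succ, Fin.sum_univ_succ,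
    Finset.sum_eq_zero, band_minor_zero a b c (m + 1) (n + 1)]
  · have h1 : (Fin.succ 0 : Fin (m + 2)) = 1 := rfl
    rw [h1, hminor, band_succ_succ a b c m 0 (n + 1) (by omega)]
    simp [band, skip]
    ring
  · intro j _
    have h2 : 3 ≤ skip 0 (n + 3) ((j : ℕ) + 1 + 1) := by
      unfold skip; split_ifs <;> omega
    have h1 : band a b c (m + 2) 0 (n + 3) j.succ.succ 0 = 0 := by
      have h3 : skip 0 (n + 3) ((j : ℕ) + 1 + 1) ≠ 0 := by omega
      have h4 : skip 0 (n + 3) ((j : ℕ) + 1 + 1) ≠ 1 := by omega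
      have h5 : skip 0 (n + 3) ((j : ℕ) + 1 + 1) ≠ 2 := by omega
      simp [band, h3, h4, h5]
    simp [h1]

/-- The tridiagonal block of `N(0,q)` satisfies the recurrence of the complete homogeneous
polynomials in `u, v` when `a c = u v` and `b = -(u + v)`. -/
theorem band_zero_det {u v : A} (hac : a * c = u * v) (hb : b = -(u + v)) (l : ℕ) :
    ∀ n : ℕ, (u - v) * ((-1) ^ n * (band a b c (n + l) 0 (n + 1)).det)
      = c ^ l * (u ^ (n + 1) - v ^ (n + 1))
  | 0 => by
    rw [zero_add, zero_add, band_zero_one]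
    ring
  | 1 => by
    rw [add_comm 1 l, band_zero_two, band_zero_one, hb]
    ring
  | n + 2 => by
    have h0 := band_zero_det hac hb l n
    have h1 := band_zero_det hac hb l (n + 1)
    rw [show n + 2 + l = (n + l) + 2 by ring, show n + 2 + 1 = n + 3 by ring,
      band_zero_add_three]
    rw [show n + 1 + l = (n + l) + 1 by ring, show n + 1 + 1 = n + 2 by ring] at h1
    linear_combination (-b) * h1 - (a * c) * h0
      - c ^ l * (u ^ (n + 2) - v ^ (n + 2)) * hb - c ^ l * (u ^ (n + 1) - v ^ (n + 1)) * hac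

theorem band_det {u v : A} (hac : a * c = u * v) (hb : b = -(u + v)) (l n : ℕ) :
    ∀ p : ℕ, (u - v) * ((-1) ^ n * (band a b c (n + l + p) p (n + 1 + p)).det)
      = a ^ p * c ^ l * (u ^ (n + 1) - v ^ (n + 1))
  | 0 => by simpa using band_zero_det a b c hac hb l n
  | p + 1 => by
    have h := band_det hac hb l n p
    rw [← add_assoc, ← add_assoc, band_succ_succ _ _ _ _ _ _ (by omega)]
    linear_combination a * h

end Band

end Vk

namespace Vk

/-! ### Standard monomials on the cone over the rational normal curve -/

section Standard

variable {Q : Type*} [CommRing Q]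

/-- The standard monomial of degree `d` and index sum `n` in `x_0,…,x_k`: as many factors `x_k`
as possible, then at most one intermediate variable, then powers of `x_0`. -/
def stdMon (k : ℕ) (x : ℕ → Q) : ℕ → ℕ → Q
  | 0, _ => 1
  | d + 1, n => x (min n k) * stdMon k x d (n - min n k)

variable {k : ℕ} {x : ℕ → Q}

theorem mul_eq_zero_index (hx : ∀ p q, p < k → q < k → x p * x (q + 1) = x (p + 1) * x q) :
    ∀ i j, i + j ≤ k → x i * x j = x 0 * x (i + j)
  | 0, j, _ => by rw [zero_add]
  | i + 1, j, h => by
    rw [← hx i j (by omega) (by omega), mul_eq_zero_index hx i (j + 1) (by omega)]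
    congr 2
    ring

theorem mul_eq_top_index (hx : ∀ p q, p < k → q < k → x p * x (q + 1) = x (p + 1) * x q) :
    ∀ t i j, i + t = k → j + t ≤ k → x i * x (j + t) = x k * x j
  | 0, i, j, h, _ => by
    obtain rfl : i = k := by omega
    rfl
  | t + 1, i, j, h, hj => by
    rw [← add_assoc, hx i (j + t) (by omega) (by omega),
      mul_eq_top_index hx t (i + 1) j (by omega) (by omega)]

/-- Modulo the `2 × 2` minors, a monomial depends only on its degree and its index sum. -/
theorem mul_stdMon (hx : ∀ p q, p < k → q < k → x p * x (q + 1) = x (p + 1) * x q) :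
    ∀ d i n, i ≤ k → n ≤ k * d → x i * stdMon k x d n = stdMon k x (d + 1) (n + i)
  | 0, i, n, hi, hn => by
    obtain rfl : n = 0 := by simpa using hn
    simp [stdMon, hi]
  | d + 1, i, n, hi, hn => by
    rcases le_or_gt k n with h | h
    · obtain ⟨r, rfl⟩ := Nat.exists_eq_add_of_le h
      have ih := mul_stdMon hx d i r hi (by rw [mul_add] at hn; omega)
      rw [stdMon, stdMon, min_eq_right h, min_eq_right (by omega),
        show k + r + i - k = r + i by omega, ← ih, Nat.add_sub_cancel_left]
      ring
    · have h0 := mul_stdMon hx d 0 0 (by omega) (by omega)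
      rw [stdMon, min_eq_left h.le, Nat.sub_self, ← mul_assoc]
      rcases le_or_gt (n + i) k with h' | h'
      · rw [stdMon, min_eq_left h', Nat.sub_self, mul_eq_zero_index hx i n (by omega),
          mul_comm (x 0), mul_assoc, h0, add_comm i n]
      · have h1 := mul_stdMon hx d (n + i - k) 0 (by omega) (by omega)
        have h2 := mul_eq_top_index hx (k - i) i (n + i - k) (by omega) (by omega)
        rw [show n + i - k + (k - i) = n by omega] at h2
        rw [stdMon, min_eq_right h'.le, h2, mul_assoc, h1, zero_add]

/-- The recurrences propagate from the variables to all standard monomials. -/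
theorem stdMon_recurrence (hk : 2 ≤ k)
    (hx : ∀ p q, p < k → q < k → x p * x (q + 1) = x (p + 1) * x q) {a b c : Q}
    (hrec : ∀ i, i + 2 ≤ k → a * x i + b * x (i + 1) + c * x (i + 2) = 0)
    (d n : ℕ) (hn : n + 2 ≤ k * d) :
    a * stdMon k x d n + b * stdMon k x d (n + 1) + c * stdMon k x d (n + 2) = 0 := by
  obtain _ | d := d
  · omega
  obtain ⟨i, r, hir, hi, hr⟩ : ∃ i r, n = r + i ∧ i + 2 ≤ k ∧ r ≤ k * d := by
    rcases le_or_gt (k - 2) n with h | h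
    · exact ⟨k - 2, n - (k - 2), by omega, by omega, by rw [mul_add] at hn; omega⟩
    · exact ⟨n, 0, by omega, by omega, by omega⟩
  subst hir
  rw [add_assoc r i 1, add_assoc r i 2, ← mul_stdMon hx d i r (by omega) hr,
    ← mul_stdMon hx d (i + 1) r (by omega) hr, ← mul_stdMon hx d (i + 2) r hi hr]
  linear_combination stdMon k x d r * hrec i hi

end Standard

/-! ### The special fibre `z = 0` -/

/-- The coordinate ring `ℂ[s,t,a,b,c]`; the variables are numbered `0,…,4` in this order. -/
abbrev S : Type := MvPolynomial (Fin 5) ℂ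

/-- The binary quadratic form `a s² + b s t + c t²`. -/
def quad : S := X 2 * X 0 ^ 2 + X 3 * X 0 * X 1 + X 4 * X 1 ^ 2

/-- The monomial `s^m t^n a^i b^j c^l`. -/
def mono (m n i j l : ℕ) : S := X 0 ^ m * X 1 ^ n * X 2 ^ i * X 3 ^ j * X 4 ^ l

theorem monomial_eq_mono (e : Fin 5 →₀ ℕ) :
    (monomial e 1 : S) = mono (e 0) (e 1) (e 2) (e 3) (e 4) := by
  rw [MvPolynomial.monomial_eq, Finsupp.prod_fintype _ _ (by simp), Fin.prod_univ_five]
  simp [mono]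

theorem linearMap_ext_mono {M : Type*} [AddCommGroup M] [Module ℂ M] {f g : S →ₗ[ℂ] M}
    (h : ∀ m n i j l, f (mono m n i j l) = g (mono m n i j l)) : f = g := by
  refine (basisMonomials (Fin 5) ℂ).ext fun e => ?_
  simp only [coe_basisMonomials, monomial_eq_mono]
  exact h _ _ _ _ _

section Section

variable {Q : Type*} [CommRing Q] [Algebra ℂ Q]

/-- The `ℂ`-linear map from `ℂ[s,t,a,b,c]` sending `s^m t^n a^i b^j c^l` to the standard monomial
with index sum `n` times `a^i b^j c^l` if `k ∣ m + n`, and to `0` otherwise. -/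
def retract (k : ℕ) (x : ℕ → Q) (a b c : Q) : S →ₗ[ℂ] Q :=
  (basisMonomials (Fin 5) ℂ).constr ℂ fun e =>
    if k ∣ e 0 + e 1 then
      stdMon k x ((e 0 + e 1) / k) (e 1) * (a ^ e 2 * b ^ e 3 * c ^ e 4) else 0

variable (k : ℕ) (x : ℕ → Q) (a b c : Q)

theorem retract_mono (m n i j l : ℕ) :
    retract k x a b c (mono m n i j l) =
      if k ∣ m + n then stdMon k x ((m + n) / k) n * (a ^ i * b ^ j * c ^ l) else 0 := by
  obtain ⟨e, h0, h1, h2, h3, h4⟩ : ∃ e : Fin 5 →₀ ℕ,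
      e 0 = m ∧ e 1 = n ∧ e 2 = i ∧ e 3 = j ∧ e 4 = l :=
    ⟨Finsupp.equivFunOnFinite.symm ![m, n, i, j, l], rfl, rfl, rfl, rfl, rfl⟩
  have := (basisMonomials (Fin 5) ℂ).constr_basis ℂ (fun e =>
    if k ∣ e 0 + e 1 then
      stdMon k x ((e 0 + e 1) / k) (e 1) * (a ^ e 2 * b ^ e 3 * c ^ e 4) else 0) e
  simp only [coe_basisMonomials, monomial_eq_mono, h0, h1, h2, h3, h4] at this
  exact this

theorem retract_one : retract k x a b c 1 = 1 := by
  have := retract_mono k x a b c 0 0 0 0 0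
  simpa [mono, stdMon] using this

theorem retract_mul_X2 (h : S) : retract k x a b c (X 2 * h) = a * retract k x a b c h := by
  suffices H : retract k x a b c ∘ₗ LinearMap.mulLeft ℂ (X 2) =
    LinearMap.mulLeft ℂ a ∘ₗ retract k x a b c from LinearMap.congr_fun H h
  refine linearMap_ext_mono fun m n i j l => ?_
  have e : X 2 * mono m n i j l = mono m n (i + 1) j l := by simp only [mono]; ring
  simp only [LinearMap.comp_apply, LinearMap.mulLeft_apply, e, retract_mono]
  split_ifs <;> ring

theorem retract_mul_X3 (h : S) : retract k x a b c (X 3 * h) = b * retract k x a b c h := by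
  suffices H : retract k x a b c ∘ₗ LinearMap.mulLeft ℂ (X 3) =
    LinearMap.mulLeft ℂ b ∘ₗ retract k x a b c from LinearMap.congr_fun H h
  refine linearMap_ext_mono fun m n i j l => ?_
  have e : X 3 * mono m n i j l = mono m n i (j + 1) l := by simp only [mono]; ring
  simp only [LinearMap.comp_apply, LinearMap.mulLeft_apply, e, retract_mono]
  split_ifs <;> ring

theorem retract_mul_X4 (h : S) : retract k x a b c (X 4 * h) = c * retract k x a b c h := by
  suffices H : retract k x a b c ∘ₗ LinearMap.mulLeft ℂ (X 4) =
    LinearMap.mulLeft ℂ c ∘ₗ retract k x a b c from LinearMap.congr_fun H h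
  refine linearMap_ext_mono fun m n i j l => ?_
  have e : X 4 * mono m n i j l = mono m n i j (l + 1) := by simp only [mono]; ring
  simp only [LinearMap.comp_apply, LinearMap.mulLeft_apply, e, retract_mono]
  split_ifs <;> ring

variable {k x a b c}

theorem retract_mul_veronese (hk : 0 < k)
    (hx : ∀ p q, p < k → q < k → x p * x (q + 1) = x (p + 1) * x q)
    (r : ℕ) (hr : r ≤ k) (h : S) :
    retract k x a b c (X 0 ^ (k - r) * X 1 ^ r * h) = x r * retract k x a b c h := by
  suffices H : retract k x a b c ∘ₗ LinearMap.mulLeft ℂ (X 0 ^ (k - r) * X 1 ^ r) =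
    LinearMap.mulLeft ℂ (x r) ∘ₗ retract k x a b c from LinearMap.congr_fun H h
  refine linearMap_ext_mono fun m n i j l => ?_
  have e : X 0 ^ (k - r) * X 1 ^ r * mono m n i j l = mono (m + (k - r)) (n + r) i j l := by
    simp only [mono]; ring
  simp only [LinearMap.comp_apply, LinearMap.mulLeft_apply, e, retract_mono,
    show m + (k - r) + (n + r) = m + n + k by omega, Nat.dvd_add_self_right,
    Nat.add_div_right _ hk]
  split_ifs with hd
  · rw [← mul_assoc (x r), mul_stdMon hx _ r n hr (by rw [Nat.mul_div_cancel' hd]; omega)]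
  · ring

theorem retract_quad_mul (hk : 2 ≤ k)
    (hx : ∀ p q, p < k → q < k → x p * x (q + 1) = x (p + 1) * x q)
    (hrec : ∀ i, i + 2 ≤ k → a * x i + b * x (i + 1) + c * x (i + 2) = 0) (h : S) :
    retract k x a b c (quad * h) = 0 := by
  suffices H : retract k x a b c ∘ₗ LinearMap.mulLeft ℂ quad = 0 from LinearMap.congr_fun H h
  refine linearMap_ext_mono fun m n i j l => ?_
  have e : quad * mono m n i j l = mono (m + 2) n (i + 1) j l
      + mono (m + 1) (n + 1) i (j + 1) l + mono m (n + 2) i j (l + 1) := by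
    simp only [mono, quad]; ring
  simp only [LinearMap.comp_apply, LinearMap.mulLeft_apply, e, retract_mono, map_add,
    show m + 2 + n = m + n + 2 by omega, show m + 1 + (n + 1) = m + n + 2 by omega,
    show m + (n + 2) = m + n + 2 by omega, LinearMap.zero_apply]
  split_ifs with hd
  · linear_combination (a ^ i * b ^ j * c ^ l) * stdMon_recurrence hk hx hrec
      ((m + n + 2) / k) n (by rw [Nat.mul_div_cancel' hd]; omega)
  · simp

end Section

end Vk

namespace Vk

variable (k : ℕ)

/-- The ideal `I(k) + (z)` of the special fibre. -/
def Jk : Ideal (R k) := Ik k ⊔ Ideal.span {zv k}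

/-- The substitution `x_i ↦ s^(k-i) t^i`, `z ↦ 0` into `ℂ[s,t,a,b,c]`. -/
def psi : R k →ₐ[ℂ] S :=
  aeval (Sum.elim (fun i => X 0 ^ (k - (i : ℕ)) * X 1 ^ (i : ℕ)) ![X 2, X 3, X 4, 0])

@[simp] theorem psi_av : psi k (av k) = X 2 := by simp [psi, av]
@[simp] theorem psi_bv : psi k (bv k) = X 3 := by simp [psi, bv]
@[simp] theorem psi_cv : psi k (cv k) = X 4 := by simp [psi, cv]
@[simp] theorem psi_zv : psi k (zv k) = 0 := by simp [psi, zv]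

theorem psi_xv {i : ℕ} (hi : i ≤ k) : psi k (xv k i) = X 0 ^ (k - i) * X 1 ^ i := by
  simp [psi, xv, hi]

theorem rec_mem {i : ℕ} (hi : i + 2 ≤ k) :
    av k * xv k i + bv k * xv k (i + 1) + cv k * xv k (i + 2) ∈ Ik k :=
  Ideal.subset_span (Or.inl ⟨i + 1, by omega, by omega, rfl⟩)

theorem minor_mem_of_lt {p q : ℕ} (hpq : p < q) (hq : q < k) :
    xv k p * xv k (q + 1) - xv k (p + 1) * xv k q ∈ Jk k := by
  have h1 : xv k p * xv k (q + 1) - xv k (p + 1) * xv k q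
      - (-1) ^ (q - p - 1) * zv k * (Nsub k p q).det ∈ Jk k :=
    Ideal.mem_sup_left (Ideal.subset_span (Or.inr ⟨p, q, hpq, by omega, rfl⟩))
  have h2 : zv k ∈ Jk k := Ideal.mem_sup_right (Ideal.subset_span rfl)
  have h3 := (Jk k).mul_mem_left ((-1) ^ (q - p - 1) * (Nsub k p q).det) h2
  convert (Jk k).add_mem h1 h3 using 1
  ring

theorem minor_mem (p q : ℕ) (hp : p < k) (hq : q < k) :
    xv k p * xv k (q + 1) - xv k (p + 1) * xv k q ∈ Jk k := by
  rcases lt_trichotomy p q with h | rfl | h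
  · exact minor_mem_of_lt k h hq
  · rw [mul_comm, sub_self]
    exact (Jk k).zero_mem
  · rw [← neg_mem_iff]
    convert minor_mem_of_lt k h hp using 1
    ring

/-- The `ℂ`-linear map `ℂ[s,t,a,b,c] → R/(I(k) + (z))`; it vanishes on multiples of the quadratic
form and induces a left inverse of the map induced by `psi`. -/
def rho : S →ₗ[ℂ] R k ⧸ Jk k :=
  retract k (fun i => Ideal.Quotient.mk (Jk k) (xv k i)) (Ideal.Quotient.mk (Jk k) (av k))
    (Ideal.Quotient.mk (Jk k) (bv k)) (Ideal.Quotient.mk (Jk k) (cv k))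

theorem mk_minor (p q : ℕ) (hp : p < k) (hq : q < k) :
    Ideal.Quotient.mk (Jk k) (xv k p) * Ideal.Quotient.mk (Jk k) (xv k (q + 1)) =
      Ideal.Quotient.mk (Jk k) (xv k (p + 1)) * Ideal.Quotient.mk (Jk k) (xv k q) := by
  rw [← map_mul, ← map_mul]
  exact Ideal.Quotient.eq.mpr (minor_mem k p q hp hq)

variable {k}

theorem rho_quad_mul (hk : 2 ≤ k) (h : S) : rho k (quad * h) = 0 := by
  refine retract_quad_mul hk (mk_minor k) (fun i hi => ?_) h
  rw [← map_mul, ← map_mul, ← map_mul, ← map_add, ← map_add]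
  exact Ideal.Quotient.eq_zero_iff_mem.mpr (Ideal.mem_sup_left (rec_mem k hi))

/-- `rho` is linear over the ambient ring, which acts on `ℂ[s,t,a,b,c]` through `psi`. -/
theorem rho_psi_mul (hk : 0 < k) (g : R k) (h : S) :
    rho k (psi k g * h) = Ideal.Quotient.mk (Jk k) g * rho k h := by
  induction g using MvPolynomial.induction_on generalizing h with
  | C r =>
    have h1 : (psi k (C r) : S) = algebraMap ℂ S r := (psi k).commutes r
    have h2 : Ideal.Quotient.mk (Jk k) (C r) = algebraMap ℂ (R k ⧸ Jk k) r := rfl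
    rw [h1, h2, ← Algebra.smul_def, ← Algebra.smul_def, map_smul]
  | add p q hp hq => rw [map_add, add_mul, map_add, hp, hq, map_add, add_mul]
  | mul_X p v hp =>
    rw [map_mul (psi k), mul_assoc, hp, map_mul (Ideal.Quotient.mk (Jk k)), mul_assoc]
    congr 1
    rcases v with i | i
    · have hi : (i : ℕ) ≤ k := by omega
      have hX : (X (Sum.inl i) : R k) = xv k i := by simp [xv, hi]
      rw [hX, psi_xv k hi]
      exact retract_mul_veronese hk (mk_minor k) i hi h
    · fin_cases i
      · change rho k (psi k (av k) * h) = Ideal.Quotient.mk (Jk k) (av k) * rho k h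
        rw [psi_av]
        exact retract_mul_X2 _ _ _ _ _ h
      · change rho k (psi k (bv k) * h) = Ideal.Quotient.mk (Jk k) (bv k) * rho k h
        rw [psi_bv]
        exact retract_mul_X3 _ _ _ _ _ h
      · change rho k (psi k (cv k) * h) = Ideal.Quotient.mk (Jk k) (cv k) * rho k h
        rw [psi_cv]
        exact retract_mul_X4 _ _ _ _ _ h
      · change rho k (psi k (zv k) * h) = Ideal.Quotient.mk (Jk k) (zv k) * rho k h
        have hz : Ideal.Quotient.mk (Jk k) (zv k) = 0 :=
          Ideal.Quotient.eq_zero_iff_mem.mpr (Ideal.mem_sup_right (Ideal.subset_span rfl))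
        rw [psi_zv, hz, zero_mul, zero_mul, map_zero]

theorem rho_psi (hk : 0 < k) (g : R k) : rho k (psi k g) = Ideal.Quotient.mk (Jk k) g := by
  have h1 : rho k 1 = 1 := retract_one _ _ _ _ _
  simpa [h1] using rho_psi_mul hk g 1

/-- The special fibre embeds, through `psi`, into `ℂ[s,t,a,b,c]/(a s² + b s t + c t²)`. -/
theorem mem_Jk_of_dvd (hk : 2 ≤ k) {g : R k} (hg : quad ∣ psi k g) : g ∈ Jk k := by
  obtain ⟨h, hh⟩ := hg
  rw [← Ideal.Quotient.eq_zero_iff_mem, ← rho_psi (by omega), hh, rho_quad_mul hk]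

/-- The embedding of the special fibre stays injective modulo `a`. -/
theorem mem_Jk_sup_of_eq (hk : 2 ≤ k) {g : R k} {h h' : S}
    (hg : psi k g = quad * h + X 2 * h') : g ∈ Jk k ⊔ Ideal.span {av k} := by
  obtain ⟨r, hr⟩ := Ideal.Quotient.mk_surjective (rho k h')
  have h1 : Ideal.Quotient.mk (Jk k) g = Ideal.Quotient.mk (Jk k) (av k * r) := by
    rw [← rho_psi (by omega), hg, map_add, rho_quad_mul hk, zero_add, ← psi_av k,
      rho_psi_mul (by omega), map_mul, hr]
  have h2 : g - av k * r ∈ Jk k := Ideal.Quotient.eq.mp h1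
  have h3 : av k * r ∈ Ideal.span {av k} := Ideal.mul_mem_right _ _ (Ideal.subset_span rfl)
  have h4 : g - av k * r + av k * r ∈ Jk k ⊔ Ideal.span {av k} :=
    Ideal.add_mem _ (Ideal.mem_sup_left h2) (Ideal.mem_sup_right h3)
  simpa using h4

theorem quad_dvd_psi_of_mem {g : R k} (hg : g ∈ Jk k) : quad ∣ psi k g := by
  suffices H : Jk k ≤ (Ideal.span {quad}).comap (psi k) from
    Ideal.mem_span_singleton.mp (H hg)
  refine sup_le (Ideal.span_le.mpr ?_) (Ideal.span_le.mpr ?_)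
  · rintro _ (⟨i, hi, hik, rfl⟩ | ⟨p, q, hpq, hq, rfl⟩)
    · refine Ideal.mem_span_singleton.mpr ⟨X 0 ^ (k - (i + 1)) * X 1 ^ (i - 1), ?_⟩
      obtain ⟨l, rfl⟩ : ∃ l, k = i + 1 + l := ⟨k - (i + 1), by omega⟩
      obtain ⟨j, rfl⟩ : ∃ j, i = j + 1 := ⟨i - 1, by omega⟩
      simp only [map_add, map_mul, psi_av, psi_bv, psi_cv]
      rw [psi_xv _ (by omega), psi_xv _ (by omega), psi_xv _ (by omega)]
      simp only [Nat.add_sub_cancel, quad, show j + 1 + 1 + l - j = l + 2 by omega,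
        show j + 1 + 1 + l - (j + 1) = l + 1 by omega,
        show j + 1 + 1 + l - (j + 1 + 1) = l by omega]
      ring
    · refine Ideal.mem_span_singleton.mpr ⟨0, ?_⟩
      obtain ⟨l, rfl⟩ : ∃ l, k = q + 1 + l := ⟨k - (q + 1), by omega⟩
      obtain ⟨n, rfl⟩ : ∃ n, q = p + 1 + n := ⟨q - (p + 1), by omega⟩
      simp only [map_sub, map_mul, psi_zv]
      rw [psi_xv _ (by omega), psi_xv _ (by omega), psi_xv _ (by omega), psi_xv _ (by omega)]
      simp only [show p + 1 + n + 1 + l - p = l + n + 2 by omega,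
        show p + 1 + n + 1 + l - (p + 1) = l + n + 1 by omega,
        show p + 1 + n + 1 + l - (p + 1 + n) = l + 1 by omega,
        show p + 1 + n + 1 + l - (p + 1 + n + 1) = l by omega]
      ring
  · rintro _ rfl
    exact Ideal.mem_span_singleton.mpr ⟨0, by simp⟩

/-! ### Regularity of `a` and `c` on the special fibre -/

/-- Setting the variable `a` of `ℂ[s,t,a,b,c]` to zero. -/
def killA : S →ₐ[ℂ] S := aeval ![X 0, X 1, 0, X 3, X 4]

theorem dvd_sub_killA (h : S) : X 2 ∣ h - killA h := by
  induction h using MvPolynomial.induction_on with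
  | C r => simp [killA]
  | add p q hp hq =>
    rw [map_add, add_sub_add_comm]
    exact dvd_add hp hq
  | mul_X p i hp =>
    have h1 : X 2 ∣ X i - killA (X i) := by fin_cases i <;> simp [killA]
    rw [map_mul, show p * X i - killA p * killA (X i)
      = (p - killA p) * X i + killA p * (X i - killA (X i)) by ring]
    exact dvd_add (dvd_mul_of_dvd_left hp _) (dvd_mul_of_dvd_right h1 _)

/-- A prime variable `X i` does not divide a polynomial with a nonzero value at a point
where the `i`-th coordinate vanishes. -/
theorem not_X_dvd {i : Fin 5} {p : S} (v : Fin 5 → ℂ) (hv : v i = 0) (hp : eval v p ≠ 0) :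
    ¬ X i ∣ p := by
  rintro ⟨q, rfl⟩
  simp [hv] at hp

theorem mem_Jk_of_av_mul (hk : 2 ≤ k) {g : R k} (hg : av k * g ∈ Jk k) : g ∈ Jk k := by
  obtain ⟨h, hh⟩ := quad_dvd_psi_of_mem hg
  rw [map_mul, psi_av] at hh
  have h2 : ¬ X 2 ∣ quad := not_X_dvd ![0, 1, 0, 0, 1] rfl (by simp [quad])
  obtain ⟨w, rfl⟩ := ((X_prime (R := ℂ) (i := (2 : Fin 5))).dvd_or_dvd ⟨_, hh.symm⟩).resolve_left h2
  refine mem_Jk_of_dvd hk ⟨w, mul_left_cancel₀ (X_ne_zero (R := ℂ) (2 : Fin 5)) ?_⟩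
  rw [hh]; ring

theorem mem_of_cv_mul (hk : 2 ≤ k) {g : R k} (hg : cv k * g ∈ Jk k ⊔ Ideal.span {av k}) :
    g ∈ Jk k ⊔ Ideal.span {av k} := by
  obtain ⟨y, hy, y', hy', hyy⟩ := Submodule.mem_sup.mp hg
  obtain ⟨r, rfl⟩ := Ideal.mem_span_singleton.mp hy'
  obtain ⟨h, hh⟩ := quad_dvd_psi_of_mem hy
  have h1 := congrArg (psi k) hyy
  rw [map_add, map_mul, map_mul, psi_av, psi_cv, hh] at h1
  -- Modulo `a`, the form becomes `t (b s + c t)`, which is prime to `c`; hence `h ∈ (a, c)`.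
  have h2 := congrArg killA h1
  simp only [map_add, map_mul] at h2
  have hA : killA (X 2) = 0 := by simp [killA]
  have hC : killA (X 4) = X 4 := by simp [killA]
  rw [hA, hC, zero_mul, add_zero] at h2
  have h3 : ¬ X 4 ∣ killA quad :=
    not_X_dvd ![1, 1, 0, 1, 0] rfl (by simp [quad, killA])
  obtain ⟨u, hu⟩ := ((X_prime (R := ℂ) (i := (4 : Fin 5))).dvd_or_dvd ⟨_, h2⟩).resolve_left h3
  obtain ⟨v, hv⟩ := dvd_sub_killA h
  have h4 : X 4 * (psi k g - quad * u) = X 2 * (quad * v + psi k r) := by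
    linear_combination -h1 + quad * hv + quad * hu
  have h5 : ¬ (X 4 : S) ∣ X 2 := not_X_dvd ![0, 0, 1, 0, 0] rfl (by simp)
  obtain ⟨w, hw⟩ := ((X_prime (R := ℂ) (i := (4 : Fin 5))).dvd_or_dvd ⟨_, h4.symm⟩).resolve_left h5
  refine mem_Jk_sup_of_eq hk (h := u) (h' := w)
    (mul_left_cancel₀ (X_ne_zero (R := ℂ) (4 : Fin 5)) ?_)
  linear_combination h4 + X 2 * hw

end Vk

namespace Vk

/-! ### Deforming the special fibre -/

section Deformation

variable {F : Type*} [Field F] [Algebra ℂ F] (v : Fin 4 → F)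

/-- With `v = (s,t,a,c)`, the point `(s, t, a, b, c)` of the hypersurface `a s² + b s t + c t² = 0`,
whose second root is `[c/s : a/t]`; as a substitution homomorphism. -/
def theta : S →ₐ[ℂ] F :=
  aeval ![v 0, v 1, v 2, -(v 0 * (v 2 / v 1) + v 1 * (v 3 / v 0)), v 3]

/-- The family of solutions `x_i = s^(k-i) t^i + ε σ^(k-i) τ^i` of the recurrence, where
`[s : t]` and `[σ : τ] = [c/s : a/t]` are the two roots of the quadratic form and `ε` is the
polynomial variable. The Cramer relations force `z = ε (s τ - t σ)²`. -/
def phi (k : ℕ) : R k →ₐ[ℂ] Polynomial F :=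
  aeval (Sum.elim
    (fun i => Polynomial.C (v 0 ^ (k - (i : ℕ)) * v 1 ^ (i : ℕ))
      + Polynomial.X * Polynomial.C ((v 3 / v 0) ^ (k - (i : ℕ)) * (v 2 / v 1) ^ (i : ℕ)))
    ![Polynomial.C (v 2), Polynomial.C (-(v 0 * (v 2 / v 1) + v 1 * (v 3 / v 0))),
      Polynomial.C (v 3),
      Polynomial.X * Polynomial.C ((v 0 * (v 2 / v 1) - v 1 * (v 3 / v 0)) ^ 2)])

variable (k : ℕ)

theorem phi_xv {i : ℕ} (hi : i ≤ k) : phi v k (xv k i) =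
    Polynomial.C (v 0) ^ (k - i) * Polynomial.C (v 1) ^ i
      + Polynomial.X * (Polynomial.C (v 3 / v 0) ^ (k - i) * Polynomial.C (v 2 / v 1) ^ i) := by
  simp [phi, xv, hi]

theorem phi_av : phi v k (av k) = Polynomial.C (v 2) := by simp [phi, av]
theorem phi_bv : phi v k (bv k) =
    Polynomial.C (-(v 0 * (v 2 / v 1) + v 1 * (v 3 / v 0))) := by simp [phi, bv]
theorem phi_cv : phi v k (cv k) = Polynomial.C (v 3) := by simp [phi, cv]
theorem phi_zv : phi v k (zv k) =
    Polynomial.X * Polynomial.C ((v 0 * (v 2 / v 1) - v 1 * (v 3 / v 0)) ^ 2) := by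
  simp [phi, zv]

theorem eval_zero_phi (g : R k) : (phi v k g).eval 0 = theta v (psi k g) := by
  induction g using MvPolynomial.induction_on with
  | C r =>
    have h1 : phi v k (C r) = algebraMap ℂ (Polynomial F) r := (phi v k).commutes r
    have h2 : psi k (C r) = algebraMap ℂ S r := (psi k).commutes r
    rw [h1, h2, (theta v).commutes, Polynomial.algebraMap_apply, Polynomial.eval_C]
  | add p q hp hq => simp [hp, hq]
  | mul_X p i hp =>
    rw [map_mul, map_mul, map_mul, Polynomial.eval_mul, hp]
    congr 1
    rcases i with i | i
    · simp [phi, psi, theta]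
    · fin_cases i <;> simp [phi, psi, theta]

theorem map_det_Nsub {A : Type*} [CommRing A] (f : R k →+* A) (p q : ℕ) {m : ℕ}
    (hm : k - 2 = m) :
    f (Nsub k p q).det = (band (f (av k)) (f (bv k)) (f (cv k)) m p q).det := by
  subst hm
  rw [RingHom.map_det]
  congr 1
  ext t s
  simp only [RingHom.mapMatrix_apply, Matrix.map_apply, Nsub, Nent, band]
  split_ifs <;> simp

variable {v k}

/-- The deformation satisfies the equations of `I(k)`. For the Cramer relations, `band_det` evaluates
`det N(p,q)` at `u = s τ`, `v = t σ`, and the factor `u - v` it carries is one of the two in `z`. -/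
theorem phi_eq_zero_of_mem (h0 : v 0 ≠ 0) (h1 : v 1 ≠ 0) {g : R k} (hg : g ∈ Ik k) :
    phi v k g = 0 := by
  suffices H : Ik k ≤ RingHom.ker (phi v k) from H hg
  have hs : Polynomial.C (v 3) = Polynomial.C (v 0) * Polynomial.C (v 3 / v 0) := by
    rw [← Polynomial.C_mul, mul_div_cancel₀ _ h0]
  have ht : Polynomial.C (v 2) = Polynomial.C (v 1) * Polynomial.C (v 2 / v 1) := by
    rw [← Polynomial.C_mul, mul_div_cancel₀ _ h1]
  refine Ideal.span_le.mpr ?_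
  rintro _ (⟨i, hi, hik, rfl⟩ | ⟨p, q, hpq, hq, rfl⟩)
  · obtain ⟨l, rfl⟩ : ∃ l, k = i + 1 + l := ⟨k - (i + 1), by omega⟩
    obtain ⟨j, rfl⟩ : ∃ j, i = j + 1 := ⟨i - 1, by omega⟩
    rw [SetLike.mem_coe, RingHom.mem_ker]
    simp only [map_add, map_mul, phi_av, phi_bv, phi_cv]
    rw [phi_xv _ _ (by omega), phi_xv _ _ (by omega), phi_xv _ _ (by omega), hs, ht]
    simp only [Nat.add_sub_cancel, show j + 1 + 1 + l - j = l + 2 by omega,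
      show j + 1 + 1 + l - (j + 1) = l + 1 by omega,
      show j + 1 + 1 + l - (j + 1 + 1) = l by omega, map_neg, map_add, map_mul]
    ring
  · obtain ⟨l, rfl⟩ : ∃ l, k = q + 1 + l := ⟨k - (q + 1), by omega⟩
    obtain ⟨n, rfl⟩ : ∃ n, q = n + 1 + p := ⟨q - (p + 1), by omega⟩
    have hdet := band_det (Polynomial.C (v 2))
      (Polynomial.C (-(v 0 * (v 2 / v 1) + v 1 * (v 3 / v 0)))) (Polynomial.C (v 3))
      (u := Polynomial.C (v 0) * Polynomial.C (v 2 / v 1))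
      (v := Polynomial.C (v 1) * Polynomial.C (v 3 / v 0))
      (by rw [hs, ht]; ring) (by simp only [map_neg, map_add, map_mul]) l n p
    have hN := map_det_Nsub (n + 1 + p + 1 + l) (phi v (n + 1 + p + 1 + l)).toRingHom p (n + 1 + p)
      (show n + 1 + p + 1 + l - 2 = n + l + p by omega)
    simp only [AlgHom.toRingHom_eq_coe, RingHom.coe_coe, phi_av, phi_bv, phi_cv] at hN
    generalize (band (Polynomial.C (v 2))
      (Polynomial.C (-(v 0 * (v 2 / v 1) + v 1 * (v 3 / v 0)))) (Polynomial.C (v 3))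
      (n + l + p) p (n + 1 + p)).det = D at hdet hN
    rw [SetLike.mem_coe, RingHom.mem_ker]
    simp only [map_sub, map_mul, map_pow, map_neg, map_one, phi_zv, hN]
    rw [phi_xv _ _ (by omega), phi_xv _ _ (by omega), phi_xv _ _ (by omega),
      phi_xv _ _ (by omega), show n + 1 + p - p - 1 = n by omega]
    simp only [show n + 1 + p + 1 + l - p = n + l + 2 by omega,
      show n + 1 + p + 1 + l - (p + 1) = n + l + 1 by omega,
      show n + 1 + p + 1 + l - (n + 1 + p) = l + 1 by omega,
      show n + 1 + p + 1 + l - (n + 1 + p + 1) = l by omega]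
    rw [hs, ht] at hdet
    linear_combination (-(Polynomial.X * (Polynomial.C (v 0) * Polynomial.C (v 2 / v 1)
      - Polynomial.C (v 1) * Polynomial.C (v 3 / v 0)))) * hdet

/-- Multiplication by a power of `s t` makes any polynomial congruent, modulo the quadratic form,
to one not involving `b`. -/
theorem exists_clear_b (h : S) : ∃ (N : ℕ) (h' : MvPolynomial (Fin 4) ℂ),
    quad ∣ (X 0 * X 1) ^ N * h - rename ![0, 1, 2, 4] h' := by
  induction h using MvPolynomial.induction_on with
  | C r => exact ⟨0, C r, by simp⟩
  | add p q hp hq =>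
    obtain ⟨N, p', u, hu⟩ := hp
    obtain ⟨M, q', w, hw⟩ := hq
    refine ⟨N + M, (X 0 * X 1) ^ M * p' + (X 0 * X 1) ^ N * q',
      (X 0 * X 1) ^ M * u + (X 0 * X 1) ^ N * w, ?_⟩
    simp only [map_add, map_mul, map_pow, rename_X, Matrix.cons_val_zero, Matrix.cons_val_one]
    linear_combination (X 0 * X 1) ^ M * hu + (X 0 * X 1) ^ N * hw
  | mul_X p i hp =>
    obtain ⟨N, p', u, hu⟩ := hp
    have key : ∀ j : Fin 4, ![(0 : Fin 5), 1, 2, 4] j = i → ∃ (N : ℕ)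
        (h' : MvPolynomial (Fin 4) ℂ),
        quad ∣ (X 0 * X 1) ^ N * (p * X i) - rename ![0, 1, 2, 4] h' := by
      rintro j rfl
      refine ⟨N, p' * X j, u * X (![(0 : Fin 5), 1, 2, 4] j), ?_⟩
      rw [map_mul, rename_X]
      linear_combination X (![(0 : Fin 5), 1, 2, 4] j) * hu
    have hi : i = 0 ∨ i = 1 ∨ i = 2 ∨ i = 3 ∨ i = 4 := by
      clear key; revert i; decide
    rcases hi with rfl | rfl | rfl | rfl | rfl
    · exact key 0 rfl
    · exact key 1 rfl
    · exact key 2 rfl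
    · -- `s t b ≡ -(a s² + c t²)` modulo the quadratic form.
      refine ⟨N + 1, -(p' * (X 2 * X 0 ^ 2 + X 3 * X 1 ^ 2)),
        (X 0 * X 1) * X 3 * u + rename ![0, 1, 2, 4] p', ?_⟩
      have e : rename ![(0 : Fin 5), 1, 2, 4]
          (-(p' * (X 2 * X 0 ^ 2 + X 3 * X 1 ^ 2)) : MvPolynomial (Fin 4) ℂ)
          = -(rename ![0, 1, 2, 4] p' * (X 2 * X 0 ^ 2 + X 4 * X 1 ^ 2)) := by
        simp
      rw [e]
      simp only [quad] at hu ⊢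
      linear_combination (X 0 * X 1) * X 3 * hu
    · exact key 3 rfl

/-- The point `theta` is generic on the hypersurface `a s² + b s t + c t² = 0`. -/
theorem quad_dvd_of_theta_eq_zero (hv : AlgebraicIndependent ℂ v) {h : S}
    (hh : theta v h = 0) : quad ∣ h := by
  obtain ⟨N, h', u, hu⟩ := exists_clear_b h
  have h0 : v 0 ≠ 0 := hv.ne_zero 0
  have h1 : v 1 ≠ 0 := hv.ne_zero 1
  have hq : theta v quad = 0 := by
    simp [theta, quad]
    field_simp
    ring
  have hr : theta v (rename ![0, 1, 2, 4] h') = aeval v h' := by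
    rw [theta, aeval_rename]
    congr 2
    ext j
    fin_cases j <;> rfl
  have h2 : h' = 0 := by
    refine hv.eq_zero_of_aeval_eq_zero h' ?_
    have := congrArg (theta v) hu
    rw [map_sub, map_mul, hh, map_mul, hq, hr] at this
    simpa using this
  rw [h2, map_zero, sub_zero, mul_pow, mul_assoc] at hu
  have n0 : ¬ X 0 ∣ quad := not_X_dvd ![0, 1, 0, 0, 1] rfl (by simp [quad])
  have n1 : ¬ X 1 ∣ quad := not_X_dvd ![1, 0, 1, 0, 0] rfl (by simp [quad])
  obtain ⟨w, rfl⟩ := (X_prime (R := ℂ) (i := (0 : Fin 5))).pow_dvd_of_dvd_mul_left N n0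
    ⟨_, hu.symm⟩
  have hw : X 1 ^ N * h = quad * w := by
    refine mul_left_cancel₀ (pow_ne_zero N (X_ne_zero (R := ℂ) (0 : Fin 5))) ?_
    rw [hu]; ring
  obtain ⟨y, rfl⟩ := (X_prime (R := ℂ) (i := (1 : Fin 5))).pow_dvd_of_dvd_mul_left N n1
    ⟨_, hw.symm⟩
  refine ⟨y, mul_left_cancel₀ (pow_ne_zero N (X_ne_zero (R := ℂ) (1 : Fin 5))) ?_⟩
  rw [hw]; ring

theorem phi_zv_ne_zero (hv : AlgebraicIndependent ℂ v) : phi v k (zv k) ≠ 0 := by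
  have h0 : v 0 ≠ 0 := hv.ne_zero 0
  have h1 : v 1 ≠ 0 := hv.ne_zero 1
  rw [phi_zv]
  refine mul_ne_zero Polynomial.X_ne_zero (Polynomial.C_ne_zero.mpr (pow_ne_zero 2 fun h => ?_))
  have h2 : v 0 ^ 2 * v 2 - v 1 ^ 2 * v 3 = 0 := by
    field_simp at h
    linear_combination h
  have h3 : (X 0 ^ 2 * X 2 - X 1 ^ 2 * X 3 : MvPolynomial (Fin 4) ℂ) = 0 :=
    hv.eq_zero_of_aeval_eq_zero _ (by simpa using h2)
  simpa using congrArg (eval ![1, 0, 1, 0]) h3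

theorem mem_Jk_of_phi_eq_zero (hk : 2 ≤ k) (hv : AlgebraicIndependent ℂ v) {g : R k}
    (hg : phi v k g = 0) : g ∈ Jk k := by
  refine mem_Jk_of_dvd hk (quad_dvd_of_theta_eq_zero hv ?_)
  rw [← eval_zero_phi, hg, Polynomial.eval_zero]

end Deformation

end Vk

namespace Vk

/-! ### Descent along the grading -/

section Grading

attribute [local instance] MvPolynomial.weightedGradedAlgebra

variable (k : ℕ)

/-- The grading with `deg x_i = k`, `deg a = deg b = deg c = 2`, `deg z = 4`. -/
def wt : Fin (k + 1) ⊕ Fin 4 → ℕ := Sum.elim (fun _ => k) ![2, 2, 2, 4]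

theorem hom_xv (i : ℕ) : IsWeightedHomogeneous (wt k) (xv k i) k := by
  unfold xv
  split_ifs with h
  · exact isWeightedHomogeneous_X ℂ (wt k) _
  · exact isWeightedHomogeneous_zero ℂ (wt k) _

theorem hom_av : IsWeightedHomogeneous (wt k) (av k) 2 := isWeightedHomogeneous_X ℂ (wt k) _
theorem hom_bv : IsWeightedHomogeneous (wt k) (bv k) 2 := isWeightedHomogeneous_X ℂ (wt k) _
theorem hom_cv : IsWeightedHomogeneous (wt k) (cv k) 2 := isWeightedHomogeneous_X ℂ (wt k) _
theorem hom_zv : IsWeightedHomogeneous (wt k) (zv k) 4 := isWeightedHomogeneous_X ℂ (wt k) _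

theorem hom_Nent (r s : ℕ) : IsWeightedHomogeneous (wt k) (Nent k r s) 2 := by
  unfold Nent
  split_ifs
  · exact hom_av k
  · exact hom_bv k
  · exact hom_cv k
  · exact isWeightedHomogeneous_zero ℂ (wt k) _

theorem hom_det (p q : ℕ) :
    IsWeightedHomogeneous (wt k) (Nsub k p q).det (2 * (k - 2)) := by
  rw [Matrix.det_apply]
  refine IsWeightedHomogeneous.sum _ _ _ fun σ _ => ?_
  have h : IsWeightedHomogeneous (wt k) (∏ i, Nsub k p q (σ i) i) (2 * (k - 2)) := by
    have := IsWeightedHomogeneous.prod (w := wt k) Finset.univ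
      (fun i : Fin (k - 2) => Nsub k p q (σ i) i) (fun _ => 2) (fun i _ => hom_Nent k _ _)
    simpa [mul_comm] using this
  rcases Int.units_eq_one_or (Equiv.Perm.sign σ) with h1 | h1
  · rw [h1, one_smul]
    exact h
  · rw [h1, Units.neg_smul, one_smul]
    exact h.neg

theorem Ik_isHomogeneous (hk : 2 ≤ k) :
    (Ik k).IsHomogeneous (weightedHomogeneousSubmodule ℂ (wt k)) := by
  refine Ideal.homogeneous_span _ _ ?_
  rintro _ (⟨i, hi, hik, rfl⟩ | ⟨p, q, hpq, hq, rfl⟩)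
  · exact ⟨2 + k, (((hom_av k).mul (hom_xv k _)).add ((hom_bv k).mul (hom_xv k _))).add
      ((hom_cv k).mul (hom_xv k _))⟩
  · refine ⟨k + k, (((hom_xv k _).mul (hom_xv k _)).sub ((hom_xv k _).mul (hom_xv k _))).sub ?_⟩
    have h : IsWeightedHomogeneous (wt k) (zv k * (Nsub k p q).det) (k + k) := by
      have := (hom_zv k).mul (hom_det k p q)
      rwa [show 4 + 2 * (k - 2) = k + k by omega] at this
    rcases neg_one_pow_eq_or (R k) (q - p - 1) with h1 | h1
    · rw [h1, one_mul]
      exact h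
    · rw [h1, neg_one_mul, neg_mul]
      exact h.neg

variable {k}

theorem component_zv_mul (g : R k) (d : ℕ) :
    weightedHomogeneousComponent (wt k) (4 + d) (zv k * g) =
      zv k * weightedHomogeneousComponent (wt k) d g := by
  simp_rw [← weightedDecomposition.decompose'_apply]
  exact DirectSum.coe_decompose_mul_add_of_left_mem
    (weightedHomogeneousSubmodule ℂ (wt k)) (hom_zv k)

theorem component_zv_mul_of_lt (g : R k) (d : ℕ) (hd : d < 4) :
    weightedHomogeneousComponent (wt k) d (zv k * g) = 0 := by
  simp_rw [← weightedDecomposition.decompose'_apply]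
  exact DirectSum.coe_decompose_mul_of_left_mem_of_not_le
    (weightedHomogeneousSubmodule ℂ (wt k)) (hom_zv k) (by omega)

/-- The kernel of `phi` is contained in `I(k) + (z)` and `z` is a nonzerodivisor modulo it, so each
homogeneous element of the kernel is, modulo `I(k)`, a multiple `z h` with `h` in the kernel
of smaller degree. -/
theorem mem_Ik_of_phi_eq_zero {F : Type*} [Field F] [Algebra ℂ F] {v : Fin 4 → F} (hk : 2 ≤ k)
    (hv : AlgebraicIndependent ℂ v) (d : ℕ) :
    ∀ g : R k, IsWeightedHomogeneous (wt k) g d → phi v k g = 0 → g ∈ Ik k := by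
  induction d using Nat.strong_induction_on with
  | _ d ih =>
    intro g hg hphi
    obtain ⟨y, hy, y', hy', rfl⟩ := Submodule.mem_sup.mp (mem_Jk_of_phi_eq_zero hk hv hphi)
    obtain ⟨h, rfl⟩ := Ideal.mem_span_singleton.mp hy'
    have h1 := weightedHomogeneousComponent_mem_of_mem ℂ (wt k) (Ik_isHomogeneous k hk) hy d
    have h2 := hg.weightedHomogeneousComponent_same
    rw [map_add] at h2
    rcases lt_or_ge d 4 with hd | hd
    · rw [component_zv_mul_of_lt h d hd, add_zero] at h2
      rwa [← h2]
    · obtain ⟨e, rfl⟩ := Nat.exists_eq_add_of_le hd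
      rw [component_zv_mul] at h2
      rw [← h2] at hphi ⊢
      refine (Ik k).add_mem h1 ((Ik k).mul_mem_left _ (ih e (by omega) _
        (weightedHomogeneousComponent_mem _ _ _) ?_))
      rw [map_add, phi_eq_zero_of_mem (hv.ne_zero 0) (hv.ne_zero 1) h1, zero_add, map_mul] at hphi
      exact (mul_eq_zero.mp hphi).resolve_left (phi_zv_ne_zero hv)

theorem mem_Ik_of_zv_mul (hk : 2 ≤ k) {g : R k} (hg : zv k * g ∈ Ik k) : g ∈ Ik k := by
  have hv : AlgebraicIndependent ℂ
      (fun i : Fin 4 => algebraMap (MvPolynomial (Fin 4) ℂ)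
        (FractionRing (MvPolynomial (Fin 4) ℂ)) (X i)) :=
    (algebraicIndependent_X (Fin 4) ℂ).map' (f := IsScalarTower.toAlgHom ℂ _ _)
      (IsFractionRing.injective _ _)
  have hI := Ik_isHomogeneous k hk
  rw [mem_iff_weightedHomogeneousComponent_mem ℂ (wt k) hI]
  intro d
  have h1 := weightedHomogeneousComponent_mem_of_mem ℂ (wt k) hI hg (4 + d)
  rw [component_zv_mul] at h1
  refine mem_Ik_of_phi_eq_zero hk hv d _
    (weightedHomogeneousComponent_mem _ _ _) ?_
  have h2 := phi_eq_zero_of_mem (v := fun i : Fin 4 => algebraMap (MvPolynomial (Fin 4) ℂ)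
    (FractionRing (MvPolynomial (Fin 4) ℂ)) (X i)) (hv.ne_zero 0) (hv.ne_zero 1) h1
  rw [map_mul] at h2
  exact (mul_eq_zero.mp h2).resolve_left (phi_zv_ne_zero hv)

end Grading

/-! ### The regular sequence -/

section Final

variable {k : ℕ}

theorem mk_mem_span_zv {g : R k} :
    Ideal.Quotient.mk (Ik k) g ∈ Ideal.ofList [Ideal.Quotient.mk (Ik k) (zv k)] ↔ g ∈ Jk k := by
  have h : Ideal.ofList [Ideal.Quotient.mk (Ik k) (zv k)]
      = (Ideal.span {zv k}).map (Ideal.Quotient.mk (Ik k)) := by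
    rw [Ideal.ofList_singleton, Ideal.map_span, Set.image_singleton]
  rw [h, ← Ideal.mem_comap, Ideal.comap_map_of_surjective' _ Ideal.Quotient.mk_surjective,
    Ideal.mk_ker, sup_comm, Jk]

theorem mk_mem_span_zv_av {g : R k} :
    Ideal.Quotient.mk (Ik k) g ∈ Ideal.ofList
      [Ideal.Quotient.mk (Ik k) (zv k), Ideal.Quotient.mk (Ik k) (av k)]
      ↔ g ∈ Jk k ⊔ Ideal.span {av k} := by
  have h : Ideal.ofList [Ideal.Quotient.mk (Ik k) (zv k), Ideal.Quotient.mk (Ik k) (av k)]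
      = (Ideal.span {zv k} ⊔ Ideal.span {av k}).map (Ideal.Quotient.mk (Ik k)) := by
    rw [Ideal.ofList_cons, Ideal.ofList_singleton, Ideal.map_sup, Ideal.map_span, Ideal.map_span,
      Set.image_singleton, Set.image_singleton]
  rw [h, ← Ideal.mem_comap, Ideal.comap_map_of_surjective' _ Ideal.Quotient.mk_surjective,
    Ideal.mk_ker, sup_comm, ← sup_assoc, Jk]

/-- All generators vanish at the origin. -/
theorem Ik_le_ker : Ik k ≤ RingHom.ker (constantCoeff (σ := Fin (k + 1) ⊕ Fin 4) (R := ℂ)) := by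
  have hx : ∀ i, constantCoeff (xv k i) = 0 := fun i => by unfold xv; split_ifs <;> simp
  refine Ideal.span_le.mpr ?_
  rintro _ (⟨i, hi, hik, rfl⟩ | ⟨p, q, hpq, hq, rfl⟩)
  · simp [RingHom.mem_ker, hx]
  · simp [RingHom.mem_ker, hx, zv]

end Final

end Vk

/-- For every `k ≥ 3`, the images of `z, a, c` in `ℂ[x_0,…,x_k,a,b,c,z]/I(k)`
form a regular sequence on that ring. -/
theorem Vk_zac_regularSequence (k : ℕ) (hk : 3 ≤ k) :
    RingTheory.Sequence.IsRegular (Vk.R k ⧸ Vk.Ik k)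
      [Ideal.Quotient.mk (Vk.Ik k) (Vk.zv k),
       Ideal.Quotient.mk (Vk.Ik k) (Vk.av k),
       Ideal.Quotient.mk (Vk.Ik k) (Vk.cv k)] := by
  refine ⟨⟨fun i hi => ?_⟩, fun htop => ?_⟩
  · rw [isSMulRegular_quotient_iff_mem_of_smul_mem]
    intro y hy
    obtain ⟨g, rfl⟩ := Ideal.Quotient.mk_surjective y
    rw [smul_eq_mul, Ideal.mul_top] at hy ⊢
    have hi' : i = 0 ∨ i = 1 ∨ i = 2 := by simp at hi; omega
    rcases hi' with rfl | rfl | rfl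
    · simp only [List.take_zero, Ideal.ofList_nil, List.getElem_cons_zero, smul_eq_mul,
        ← map_mul, Ideal.mem_bot, Ideal.Quotient.eq_zero_iff_mem] at hy ⊢
      exact Vk.mem_Ik_of_zv_mul (by omega) hy
    · simp only [List.take_succ_cons, List.take_zero, List.getElem_cons_succ,
        List.getElem_cons_zero, smul_eq_mul, ← map_mul] at hy ⊢
      rw [Vk.mk_mem_span_zv] at hy ⊢
      exact Vk.mem_Jk_of_av_mul (by omega) hy
    · simp only [List.take_succ_cons, List.take_zero, List.getElem_cons_succ,
        List.getElem_cons_zero, smul_eq_mul, ← map_mul] at hy ⊢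
      rw [Vk.mk_mem_span_zv_av] at hy ⊢
      exact Vk.mem_of_cv_mul (by omega) hy
  · -- Evaluation at the origin factors through the quotient and kills `z`, `a`, `c`, but not `1`.
    rw [smul_eq_mul, Ideal.mul_top] at htop
    let ev : Vk.R k ⧸ Vk.Ik k →+* ℂ := Ideal.Quotient.lift (Vk.Ik k) constantCoeff
      fun _ h => Vk.Ik_le_ker h
    have h1 : Ideal.ofList [Ideal.Quotient.mk (Vk.Ik k) (Vk.zv k),
        Ideal.Quotient.mk (Vk.Ik k) (Vk.av k), Ideal.Quotient.mk (Vk.Ik k) (Vk.cv k)]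
        ≤ RingHom.ker ev := by
      refine Ideal.span_le.mpr fun r hr => ?_
      simp only [List.mem_cons, List.not_mem_nil, or_false, Set.mem_ofPred_eq] at hr
      rcases hr with rfl | rfl | rfl
      · exact constantCoeff_X ℂ _
      · exact constantCoeff_X ℂ _
      · exact constantCoeff_X ℂ _
    have h2 : (1 : Vk.R k ⧸ Vk.Ik k) ∈ RingHom.ker ev := h1 (htop ▸ Submodule.mem_top)
    rw [RingHom.mem_ker, map_one] at h2
    exact one_ne_zero h2
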